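/- arXiv:1711.10240 — 5 statements merged into one kernel-verified Lean document; each statement's English description precedes it below -/
import Mathlib

section
/- (Lemma on the optimal covariant measure-and-prepare strategy.) Let G be a finite group, U : G → U(d) an irreducible unitary representation on ℂ^d, U' : G → U(d') a unitary representation on ℂ^{d'}, and let Ω be a Hermitian operator on ℂ^{d'}⊗ℂ^d satisfying [Ω, U'_g⊗U_g] = 0 for all g ∈ G. For a finite POVM {P_i} on ℂ^d and density matrices {ρ_i} on ℂ^{d'}, define the measure-and-prepare score S({P_i},{ρ_i}) := Σ_i Tr[(ρ_i⊗P_i) Ω]. Then: (i) for every unit vector φ ∈ ℂ^d, the covariant family {(d/|G|) U_g|φ⟩⟨φ|U_g†}_{g∈G} is a POVM, i.e. (d/|G|) Σ_{g∈G} U_g|φ⟩⟨φ|U_g† = I_d; and (ii) the supremum of S over all finite POVMs and all families of density matrices equals the supremum, over unit vectors ψ ∈ ℂ^{d'} and φ ∈ ℂ^d, of (d/|G|) Σ_{g∈G} ⟨(U'_g ψ)⊗(U_g φ), Ω ((U'_g ψ)⊗(U_g φ))⟩; that is, the optimal measure-and-prepare strategy measures a covariant POVM {P_g = (d/|G|)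 U_g|φ⟩⟨φ|U_g†} and prepares the covariant states |ψ_g⟩ = U'_g|ψ⟩. -/
/-!
Since `U` is irreducible, Schur's lemma makes `∑ g, U g * X * (U g)ᴴ` a multiple of the identity,
and comparing traces gives the multiple; for `X` a rank-one projector this is (i), and it exhibits
every covariant strategy as a measure-and-prepare strategy. Conversely, the score is bilinear and
each positive semidefinite matrix is a nonnegative combination of rank-one projectors, so averaging
bounds any score by `d * Tr[(|ψ⟩⟨ψ| ⊗ |φ⟩⟨φ|) Ω]` for some unit vectors `ψ` and `φ`. By invariance
of `Ω`, this is the score of the covariant strategy generated by `ψ` and `φ`.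
-/

open Matrix Kronecker BigOperators ComplexOrder

noncomputable section

/-- Rank-one projector `|v⟩⟨v|` onto a vector. -/
def outer {ι : Type*} (v : ι → ℂ) : Matrix ι ι ℂ :=
  Matrix.vecMulVec v (star v)

/-- Tensor product of two vectors. -/
def tensorVec {d' d : ℕ} (a : Fin d' → ℂ) (b : Fin d → ℂ) : Fin d' × Fin d → ℂ :=
  fun p => a p.1 * b p.2

section RankOne

variable {ι κ : Type*} [Fintype ι]

lemma trace_outer (v : ι → ℂ) : (outer v).trace = ((∑ i, ‖v i‖ ^ 2 : ℝ) : ℂ) := by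
  simp [outer, trace_vecMulVec, dotProduct, Complex.mul_conj']

lemma trace_outer_mul (v : ι → ℂ) (M : Matrix ι ι ℂ) :
    (outer v * M).trace = star v ⬝ᵥ M *ᵥ v := by
  rw [outer, vecMulVec_mul, trace_vecMulVec, dotProduct_comm, dotProduct_mulVec]

lemma mul_outer_mul_conjTranspose (A : Matrix κ ι ℂ) (v : ι → ℂ) :
    A * outer v * Aᴴ = outer (A *ᵥ v) := by
  rw [outer, outer, mul_vecMulVec, vecMulVec_mul, star_mulVec]

lemma sum_norm_sq_mulVec [Fintype κ] [DecidableEq ι] {A : Matrix κ ι ℂ} (hA : Aᴴ * A = 1)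
    (v : ι → ℂ) : ∑ k, ‖(A *ᵥ v) k‖ ^ 2 = ∑ i, ‖v i‖ ^ 2 := by
  apply Complex.ofReal_injective
  rw [← trace_outer, ← trace_outer, ← mul_outer_mul_conjTranspose, trace_mul_cycle, hA,
    Matrix.one_mul]

lemma outer_kronecker_outer {d' d : ℕ} (a : Fin d' → ℂ) (b : Fin d → ℂ) :
    outer a ⊗ₖ outer b = outer (tensorVec a b) := by
  ext
  simp only [outer, tensorVec, kroneckerMap_apply, vecMulVec_apply, Pi.star_apply, star_mul']
  ring

lemma isHermitian_eq_sum_eigenvalues_smul_outer [DecidableEq ι] {A : Matrix ι ι ℂ}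
    (hA : A.IsHermitian) : A = ∑ i, hA.eigenvalues i • outer (hA.eigenvectorBasis i) := by
  conv_lhs => rw [hA.spectral_theorem]
  ext j k
  simp only [Unitary.conjStarAlgAut_apply, Matrix.mul_apply, diagonal_apply, star_apply,
    Matrix.sum_apply, Matrix.smul_apply, outer, vecMulVec_apply, Pi.star_apply,
    IsHermitian.eigenvectorUnitary_apply, Function.comp_apply, mul_ite, mul_zero,
    Finset.sum_ite_eq', Finset.mem_univ, if_true, Complex.real_smul]
  exact Finset.sum_congr rfl fun i _ => by rw [mul_left_comm, ← mul_assoc]; rfl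

end RankOne

section Averaging

lemma exists_sum_mul_le_sum_mul {κ R : Type*} [Fintype κ] [Nonempty κ] [Semiring R] [LinearOrder R]
    [IsOrderedRing R] {w : κ → R} (hw : ∀ k, 0 ≤ w k) (x : κ → R) :
    ∃ k, ∑ j, w j * x j ≤ (∑ j, w j) * x k := by
  obtain ⟨k, hk⟩ := Finite.exists_max x
  refine ⟨k, ?_⟩
  rw [Finset.sum_mul]
  exact Finset.sum_le_sum fun j _ => mul_le_mul_of_nonneg_left (hk j) (hw j)

lemma exists_le_trace_mul_outer {ι : Type*} [Fintype ι] [Nonempty ι] {A : Matrix ι ι ℂ}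
    (hA : A.PosSemidef) (f : Matrix ι ι ℂ →ₗ[ℝ] ℝ) :
    ∃ v : ι → ℂ, ∑ i, ‖v i‖ ^ 2 = 1 ∧ f A ≤ A.trace.re * f (outer v) := by
  classical
  let u := hA.isHermitian.eigenvectorBasis
  obtain ⟨k, hk⟩ := exists_sum_mul_le_sum_mul hA.eigenvalues_nonneg fun i => f (outer (u i))
  have hunit : ∑ i, ‖u k i‖ ^ 2 = 1 := by
    rw [← EuclideanSpace.norm_sq_eq, u.norm_eq_one, one_pow]
  have htrace : A.trace.re = ∑ i, hA.isHermitian.eigenvalues i := by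
    simp [hA.isHermitian.trace_eq_sum_eigenvalues]
  refine ⟨u k, hunit, ?_⟩
  calc f A = ∑ i, hA.isHermitian.eigenvalues i * f (outer (u i)) := by
        conv_lhs => rw [isHermitian_eq_sum_eigenvalues_smul_outer hA.isHermitian]
        simp only [map_sum, map_smul, smul_eq_mul, u]
    _ ≤ A.trace.re * f (outer (u k)) := htrace ▸ hk

end Averaging

section Score

variable {m n κ : Type*} [Fintype m] [Fintype n]

/-- The score `Re Tr[(ρ ⊗ P) Ω]` of preparing `ρ` upon the outcome with effect `P`, as a real
bilinear form in `ρ` and `P`. -/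
def score (Ω : Matrix (m × n) (m × n) ℂ) : Matrix m m ℂ →ₗ[ℝ] Matrix n n ℂ →ₗ[ℝ] ℝ :=
  (kroneckerBilinear (R := ℝ)).compr₂
    (Complex.reLm ∘ₗ traceLinearMap (m × n) ℝ ℂ ∘ₗ LinearMap.mulRight ℝ Ω)

lemma score_apply (Ω : Matrix (m × n) (m × n) ℂ) (ρ : Matrix m m ℂ) (P : Matrix n n ℂ) :
    score Ω ρ P = ((ρ ⊗ₖ P) * Ω).trace.re :=
  rfl

lemma score_outer_outer {d' d : ℕ} (Ω : Matrix (Fin d' × Fin d) (Fin d' × Fin d) ℂ)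
    (a : Fin d' → ℂ) (b : Fin d → ℂ) :
    score Ω (outer a) (outer b) = (star (tensorVec a b) ⬝ᵥ Ω *ᵥ tensorVec a b).re := by
  rw [score_apply, outer_kronecker_outer, trace_outer_mul]

lemma score_conj [DecidableEq m] [DecidableEq n] {Ω : Matrix (m × n) (m × n) ℂ}
    {A : Matrix m m ℂ} {B : Matrix n n ℂ} (hA : Aᴴ * A = 1) (hB : Bᴴ * B = 1)
    (hΩ : Ω * (A ⊗ₖ B) = (A ⊗ₖ B) * Ω) (ρ : Matrix m m ℂ) (P : Matrix n n ℂ) :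
    score Ω (A * ρ * Aᴴ) (B * P * Bᴴ) = score Ω ρ P := by
  have hunitary : (A ⊗ₖ B)ᴴ * (A ⊗ₖ B) = 1 := by
    rw [conjTranspose_kronecker, ← mul_kronecker_mul, hA, hB, one_kronecker_one]
  have htrace : ((A ⊗ₖ B) * (ρ ⊗ₖ P) * (A ⊗ₖ B)ᴴ * Ω).trace = ((ρ ⊗ₖ P) * Ω).trace := by
    rw [Matrix.mul_assoc _ _ Ω, trace_mul_comm, ← Matrix.mul_assoc, Matrix.mul_assoc _ Ω, hΩ,
      ← Matrix.mul_assoc, hunitary, Matrix.one_mul, trace_mul_comm]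
  rw [score_apply, score_apply, mul_kronecker_mul, mul_kronecker_mul, ← conjTranspose_kronecker,
    htrace]

lemma exists_score_le_trace_mul_outer [Nonempty n] (Ω : Matrix (m × n) (m × n) ℂ)
    {ρ : Matrix m m ℂ} {P : Matrix n n ℂ} (hρ : ρ.PosSemidef) (hρ1 : ρ.trace = 1)
    (hP : P.PosSemidef) :
    ∃ (ψ : m → ℂ) (φ : n → ℂ), ∑ i, ‖ψ i‖ ^ 2 = 1 ∧ ∑ i, ‖φ i‖ ^ 2 = 1 ∧
      score Ω ρ P ≤ P.trace.re * score Ω (outer ψ) (outer φ) := by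
  have : Nonempty m := by
    by_contra hm
    rw [not_nonempty_iff] at hm
    simp [Matrix.trace] at hρ1
  obtain ⟨φ, hφ, hle_φ⟩ := exists_le_trace_mul_outer hP (score Ω ρ)
  obtain ⟨ψ, hψ, hle_ψ⟩ := exists_le_trace_mul_outer hρ ((score Ω).flip (outer φ))
  rw [hρ1, Complex.one_re, one_mul] at hle_ψ
  have htr : 0 ≤ P.trace.re := (Complex.le_def.mp hP.trace_nonneg).1
  exact ⟨ψ, φ, hψ, hφ, hle_φ.trans (mul_le_mul_of_nonneg_left hle_ψ htr)⟩

lemma exists_sum_score_le_card_mul_outer [Fintype κ] [Nonempty n] [DecidableEq n]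
    (Ω : Matrix (m × n) (m × n) ℂ) {P : κ → Matrix n n ℂ} (hP : ∀ k, (P k).PosSemidef)
    (hP1 : ∑ k, P k = 1) {ρ : κ → Matrix m m ℂ} (hρ : ∀ k, (ρ k).PosSemidef ∧ (ρ k).trace = 1) :
    ∃ (ψ : m → ℂ) (φ : n → ℂ), ∑ i, ‖ψ i‖ ^ 2 = 1 ∧ ∑ i, ‖φ i‖ ^ 2 = 1 ∧
      ∑ k, score Ω (ρ k) (P k) ≤ Fintype.card n * score Ω (outer ψ) (outer φ) := by
  have htrace : ∑ k, (P k).trace.re = Fintype.card n := by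
    rw [← Complex.re_sum, ← trace_sum, hP1, trace_one, Complex.natCast_re]
  have : Nonempty κ := by
    by_contra hκ
    rw [not_nonempty_iff] at hκ
    simp at hP1
  choose ψ φ hψ hφ hle using fun k =>
    exists_score_le_trace_mul_outer Ω (hρ k).1 (hρ k).2 (hP k)
  obtain ⟨k, hk⟩ := exists_sum_mul_le_sum_mul
    (fun k => (Complex.le_def.mp (hP k).trace_nonneg).1)
    fun k => score Ω (outer (ψ k)) (outer (φ k))
  refine ⟨ψ k, φ k, hψ k, hφ k, (Finset.sum_le_sum fun j _ => hle j).trans ?_⟩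
  rwa [← htrace]

/-- The scores attained by measure-and-prepare strategies with finitely many outcomes. Outcomes are
indexed by `Fin N`, which keeps the quantification over index sets within one universe. -/
def measurePrepareScores [DecidableEq n] (Ω : Matrix (m × n) (m × n) ℂ) : Set ℝ :=
  {s | ∃ (N : ℕ) (P : Fin N → Matrix n n ℂ) (ρ : Fin N → Matrix m m ℂ),
    (∀ i, (P i).PosSemidef) ∧ ∑ i, P i = 1 ∧ (∀ i, (ρ i).PosSemidef ∧ (ρ i).trace = 1) ∧
    s = (∑ i, ((ρ i ⊗ₖ P i) * Ω).trace).re}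

lemma sum_score_mem_measurePrepareScores [Fintype κ] [DecidableEq n]
    (Ω : Matrix (m × n) (m × n) ℂ) {P : κ → Matrix n n ℂ} (hP : ∀ k, (P k).PosSemidef)
    (hP1 : ∑ k, P k = 1) {ρ : κ → Matrix m m ℂ} (hρ : ∀ k, (ρ k).PosSemidef ∧ (ρ k).trace = 1) :
    ∑ k, score Ω (ρ k) (P k) ∈ measurePrepareScores Ω := by
  let e := (Fintype.equivFin κ).symm
  refine ⟨Fintype.card κ, P ∘ e, ρ ∘ e, fun i => hP (e i), (e.sum_comp P).trans hP1,
    fun i => hρ (e i), ?_⟩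
  rw [Complex.re_sum]
  exact (e.sum_comp fun k => score Ω (ρ k) (P k)).symm

lemma mul_sum_score_outer_mem_measurePrepareScores [Fintype κ] [DecidableEq n]
    (Ω : Matrix (m × n) (m × n) ℂ) {c : ℝ} (hc : 0 ≤ c) {ψ : κ → m → ℂ} {φ : κ → n → ℂ}
    (hψ : ∀ k, ∑ i, ‖ψ k i‖ ^ 2 = 1) (hφ : c • ∑ k, outer (φ k) = 1) :
    c * ∑ k, score Ω (outer (ψ k)) (outer (φ k)) ∈ measurePrepareScores Ω := by
  have hP (k : κ) : (c • outer (φ k)).PosSemidef := (posSemidef_vecMulVec_self_star _).smul hc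
  have hρ (k : κ) : (outer (ψ k)).PosSemidef ∧ (outer (ψ k)).trace = 1 :=
    ⟨posSemidef_vecMulVec_self_star _, by rw [trace_outer, hψ, Complex.ofReal_one]⟩
  have hmem := sum_score_mem_measurePrepareScores Ω hP (Finset.smul_sum.symm.trans hφ) hρ
  simpa only [map_smul, smul_eq_mul, ← Finset.mul_sum] using hmem

lemma sum_score_outer_mulVec [Fintype κ] [DecidableEq m] [DecidableEq n]
    {Ω : Matrix (m × n) (m × n) ℂ} {U' : κ → Matrix m m ℂ} {U : κ → Matrix n n ℂ}
    (hU' : ∀ k, (U' k)ᴴ * U' k = 1) (hU : ∀ k, (U k)ᴴ * U k = 1)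
    (hΩ : ∀ k, Ω * (U' k ⊗ₖ U k) = (U' k ⊗ₖ U k) * Ω) (ψ : m → ℂ) (φ : n → ℂ) :
    ∑ k, score Ω (outer (U' k *ᵥ ψ)) (outer (U k *ᵥ φ)) =
      Fintype.card κ * score Ω (outer ψ) (outer φ) := by
  simp only [← mul_outer_mul_conjTranspose, score_conj (hU' _) (hU _) (hΩ _), Finset.sum_const,
    Finset.card_univ, nsmul_eq_mul]

end Score

section Schur

variable {κ ι K : Type*} [Fintype ι] [DecidableEq ι] [Field K] [IsAlgClosed K]

lemma exists_eq_smul_one_of_forall_mul_comm [Nonempty ι] {U : κ → Matrix ι ι K}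
    (hirred : ∀ W : Submodule K (ι → K), (∀ g, ∀ v ∈ W, U g *ᵥ v ∈ W) → W = ⊥ ∨ W = ⊤)
    {A : Matrix ι ι K} (hA : ∀ g, U g * A = A * U g) : ∃ μ : K, A = μ • 1 := by
  obtain ⟨μ, hμ⟩ := Module.End.exists_eigenvalue (toLin' A)
  have hinvariant : ∀ g, ∀ v ∈ Module.End.eigenspace (toLin' A) μ,
      U g *ᵥ v ∈ Module.End.eigenspace (toLin' A) μ := by
    intro g v hv
    rw [Module.End.mem_eigenspace_iff, toLin'_apply] at hv ⊢
    rw [mulVec_mulVec, ← hA, ← mulVec_mulVec, hv, mulVec_smul]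
  have htop := (hirred _ hinvariant).resolve_left hμ
  refine ⟨μ, ext_of_mulVec_single fun i => ?_⟩
  have hv : Pi.single i 1 ∈ Module.End.eigenspace (toLin' A) μ := htop ▸ Submodule.mem_top
  rw [Module.End.mem_eigenspace_iff, toLin'_apply] at hv
  rw [hv, smul_mulVec, one_mulVec]

lemma card_smul_sum_conj_eq_trace_smul_one [StarRing K] {G : Type*} [Group G] [Fintype G]
    {U : G → Matrix ι ι K} (hmul : ∀ g h, U (g * h) = U g * U h)
    (hunitary : ∀ g, (U g)ᴴ * U g = 1)
    (hirred : ∀ W : Submodule K (ι → K), (∀ g, ∀ v ∈ W, U g *ᵥ v ∈ W) → W = ⊥ ∨ W = ⊤)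
    (X : Matrix ι ι K) :
    (Fintype.card ι : K) • ∑ g, U g * X * (U g)ᴴ = (Fintype.card G * X.trace) • 1 := by
  cases isEmpty_or_nonempty ι
  · exact Subsingleton.elim _ _
  set A := ∑ g, U g * X * (U g)ᴴ with hA
  have hconj (h : G) : U h * A * (U h)ᴴ = A := by
    rw [hA, Finset.mul_sum, Finset.sum_mul]
    refine Fintype.sum_equiv (Equiv.mulLeft h) _ _ fun g => ?_
    simp only [Equiv.coe_mulLeft, hmul, conjTranspose_mul, Matrix.mul_assoc]
  have hcomm (h : G) : U h * A = A * U h := by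
    nth_rw 2 [← hconj h]
    rw [Matrix.mul_assoc _ _ (U h), hunitary, Matrix.mul_one]
  have htrace : A.trace = Fintype.card G * X.trace := by
    simp only [hA, trace_sum, trace_mul_cycle, hunitary, Matrix.one_mul, Finset.sum_const,
      Finset.card_univ, nsmul_eq_mul]
  obtain ⟨μ, hμ⟩ := exists_eq_smul_one_of_forall_mul_comm hirred hcomm
  rw [← htrace, hμ, smul_smul, trace_smul, trace_one, smul_eq_mul, mul_comm]

end Schur

lemma smul_sum_conj_outer_eq_one {ι G : Type*} [Fintype ι] [DecidableEq ι] [Group G]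
    [Fintype G] {U : G → Matrix ι ι ℂ}
    (hmul : ∀ g h, U (g * h) = U g * U h) (hunitary : ∀ g, (U g)ᴴ * U g = 1)
    (hirred : ∀ W : Submodule ℂ (ι → ℂ), (∀ g, ∀ v ∈ W, U g *ᵥ v ∈ W) → W = ⊥ ∨ W = ⊤)
    {φ : ι → ℂ} (hφ : ∑ i, ‖φ i‖ ^ 2 = 1) :
    ((Fintype.card ι : ℂ) / (Fintype.card G : ℂ)) • ∑ g, U g * outer φ * (U g)ᴴ = 1 := by
  have hG : (Fintype.card G : ℂ) ≠ 0 := Nat.cast_ne_zero.mpr Fintype.card_ne_zero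
  rw [div_eq_inv_mul, mul_smul, card_smul_sum_conj_eq_trace_smul_one hmul hunitary hirred,
    trace_outer, hφ, Complex.ofReal_one, mul_one, inv_smul_smul₀ hG]

theorem optimal_covariant_MP_general {d' d : ℕ} (hd : 0 < d)
    {G : Type*} [Group G] [Fintype G]
    (U : G → Matrix (Fin d) (Fin d) ℂ)
    (hUmul : ∀ g h, U (g * h) = U g * U h)
    (hUunitary : ∀ g, (U g)ᴴ * U g = 1)
    (hUirred : ∀ W : Submodule ℂ (Fin d → ℂ),
      (∀ g, ∀ v ∈ W, (U g) *ᵥ v ∈ W) → W = ⊥ ∨ W = ⊤)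
    (U' : G → Matrix (Fin d') (Fin d') ℂ)
    (hU'unitary : ∀ g, (U' g)ᴴ * U' g = 1)
    (Ω : Matrix (Fin d' × Fin d) (Fin d' × Fin d) ℂ)
    (hcov : ∀ g, Ω * (U' g ⊗ₖ U g) = (U' g ⊗ₖ U g) * Ω) :
    (∀ φ : Fin d → ℂ, (∑ i, ‖φ i‖ ^ 2) = 1 →
      ((d : ℂ) / (Fintype.card G : ℂ)) • ∑ g : G, U g * outer φ * (U g)ᴴ = 1) ∧
    sSup { s : ℝ | ∃ (n : ℕ) (P : Fin n → Matrix (Fin d) (Fin d) ℂ)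
          (ρ : Fin n → Matrix (Fin d') (Fin d') ℂ),
          (∀ i, (P i).PosSemidef) ∧ (∑ i, P i) = 1 ∧
          (∀ i, (ρ i).PosSemidef ∧ (ρ i).trace = 1) ∧
          s = (∑ i, ((ρ i ⊗ₖ P i) * Ω).trace).re } =
      sSup { s : ℝ | ∃ (ψ : Fin d' → ℂ) (φ : Fin d → ℂ),
          (∑ i, ‖ψ i‖ ^ 2) = 1 ∧ (∑ i, ‖φ i‖ ^ 2) = 1 ∧
          s = (d : ℝ) / (Fintype.card G : ℝ) *
            ∑ g : G, (star (tensorVec (U' g *ᵥ ψ) (U g *ᵥ φ)) ⬝ᵥ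
              Ω *ᵥ tensorVec (U' g *ᵥ ψ) (U g *ᵥ φ)).re } := by
  have : NeZero d := ⟨hd.ne'⟩
  have hpovm : ∀ φ : Fin d → ℂ, (∑ i, ‖φ i‖ ^ 2) = 1 →
      ((d : ℂ) / (Fintype.card G : ℂ)) • ∑ g : G, U g * outer φ * (U g)ᴴ = 1 := fun φ hφ => by
    simpa only [Fintype.card_fin] using smul_sum_conj_outer_eq_one hUmul hUunitary hUirred hφ
  simp only [← score_outer_outer]
  refine ⟨hpovm, csSup_eq_csSup_of_forall_exists_le ?_ ?_⟩
  · rintro _ ⟨N, P, ρ, hP, hP1, hρ, rfl⟩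
    obtain ⟨ψ, φ, hψ, hφ, hle⟩ := exists_sum_score_le_card_mul_outer Ω hP hP1 hρ
    refine ⟨_, ⟨ψ, φ, hψ, hφ, rfl⟩, ?_⟩
    have hG : (Fintype.card G : ℝ) ≠ 0 := Nat.cast_ne_zero.mpr Fintype.card_ne_zero
    rw [sum_score_outer_mulVec hU'unitary hUunitary hcov, ← mul_assoc, div_mul_cancel₀ _ hG,
      Complex.re_sum]
    rwa [Fintype.card_fin] at hle
  · rintro _ ⟨ψ, φ, hψ, hφ, rfl⟩
    refine ⟨_, mul_sum_score_outer_mem_measurePrepareScores Ω (by positivity)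
      (fun g => (sum_norm_sq_mulVec (hU'unitary g) ψ).trans hψ) ?_, le_rfl⟩
    simpa [mul_outer_mul_conjTranspose, ← Complex.coe_smul] using hpovm φ hφ

/-- optimal covariant measure-and-prepare strategy: let `U` be an
irreducible unitary representation of a finite group `G` on `ℂ^d`, `U'` a unitary
representation on `ℂ^{d'}`, and `Ω` a Hermitian operator commuting with all
`U'_g ⊗ U_g`.  Then (i) for every unit vector `φ`, the covariant family
`{(d/|G|) U_g |φ⟩⟨φ| U_g†}` is a POVM, and (ii) the supremum of the score
`S({P_i},{ρ_i}) = Σ_i Tr[(ρ_i ⊗ P_i) Ω]` over all finite POVMs and families of density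
matrices equals the supremum over unit vectors `ψ, φ` of
`(d/|G|) Σ_g ⟨(U'_g ψ)⊗(U_g φ), Ω ((U'_g ψ)⊗(U_g φ))⟩`. -/
theorem optimal_covariant_MP {d' d : ℕ} (hd : 0 < d)
    (G : Type) [Group G] [Fintype G]
    (U : G → Matrix (Fin d) (Fin d) ℂ)
    (hU1 : U 1 = 1) (hUmul : ∀ g h, U (g * h) = U g * U h)
    (hUunitary : ∀ g, (U g)ᴴ * U g = 1)
    (hUirred : ∀ W : Submodule ℂ (Fin d → ℂ),
      (∀ g, ∀ v ∈ W, (U g) *ᵥ v ∈ W) → W = ⊥ ∨ W = ⊤)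
    (U' : G → Matrix (Fin d') (Fin d') ℂ)
    (hU'1 : U' 1 = 1) (hU'mul : ∀ g h, U' (g * h) = U' g * U' h)
    (hU'unitary : ∀ g, (U' g)ᴴ * U' g = 1)
    (Ω : Matrix (Fin d' × Fin d) (Fin d' × Fin d) ℂ)
    (hΩ : Ω.IsHermitian)
    (hcov : ∀ g, Ω * (U' g ⊗ₖ U g) = (U' g ⊗ₖ U g) * Ω) :
    -- (i) the covariant family is a POVM
    (∀ φ : Fin d → ℂ, (∑ i, ‖φ i‖ ^ 2) = 1 →
      ((d : ℂ) / (Fintype.card G : ℂ)) • ∑ g : G, U g * outer φ * (U g)ᴴ = 1) ∧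
    -- (ii) the optimal measure-and-prepare score is achieved by a covariant strategy
    sSup { s : ℝ | ∃ (n : ℕ) (P : Fin n → Matrix (Fin d) (Fin d) ℂ)
          (ρ : Fin n → Matrix (Fin d') (Fin d') ℂ),
          (∀ i, (P i).PosSemidef) ∧ (∑ i, P i) = 1 ∧
          (∀ i, (ρ i).PosSemidef ∧ (ρ i).trace = 1) ∧
          s = (∑ i, ((ρ i ⊗ₖ P i) * Ω).trace).re } =
      sSup { s : ℝ | ∃ (ψ : Fin d' → ℂ) (φ : Fin d → ℂ),
          (∑ i, ‖ψ i‖ ^ 2) = 1 ∧ (∑ i, ‖φ i‖ ^ 2) = 1 ∧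
          s = (d : ℝ) / (Fintype.card G : ℝ) *
            ∑ g : G, (star (tensorVec (U' g *ᵥ ψ) (U g *ᵥ φ)) ⬝ᵥ
              Ω *ᵥ tensorVec (U' g *ᵥ ψ) (U g *ᵥ φ)).re } :=
  optimal_covariant_MP_general hd U hUmul hUunitary hUirred U' hU'unitary Ω hcov

end
end

section
/- (Fidelity benchmark for teleportation of pure states.) For every d ≥ 2, let P_+ be the orthogonal projector onto the symmetric subspace of ℂ^d⊗ℂ^d and let Ω := P_+ / Tr[P_+] = 2 P_+ / (d(d+1)). Then the maximum of Tr[C Ω] over all separable positive semidefinite operators C on ℂ^d⊗ℂ^d with Tr_{A'}[C] = I_d equals 2/(d+1). Equivalently, the maximal average fidelity achievable by measure-and-prepare channels on uniformly (Haar) distributed pure input states in dimension d is 2/(d+1). -/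
/-!
`P₊` is an orthogonal projector, so `Tr[C P₊] ≤ Tr[C] = Tr[Tr_{A'} C] = d` for every positive
semidefinite `C` with `Tr_{A'} C = I`, and multiplying by the normalisation `2 / (d (d + 1))` gives
the bound `2 / (d + 1)`. Equality holds as soon as `C P₊ = C`, for instance for the separable
operator `∑ i, |i⟩⟨i| ⊗ |i⟩⟨i|`, which is supported on symmetric vectors.
-/

open Matrix Kronecker BigOperators ComplexOrder

noncomputable section

/-- A separable operator on `ℂ^d ⊗ ℂ^d`: a finite sum of tensor products of
positive semidefinite operators. -/
def Separable {d' d : ℕ} (C : Matrix (Fin d' × Fin d) (Fin d' × Fin d) ℂ) : Prop :=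
  ∃ (n : ℕ) (A : Fin n → Matrix (Fin d') (Fin d') ℂ)
    (B : Fin n → Matrix (Fin d) (Fin d) ℂ),
    (∀ k, (A k).PosSemidef) ∧ (∀ k, (B k).PosSemidef) ∧ C = ∑ k, A k ⊗ₖ B k

/-- Partial trace over the first tensor factor. -/
def trA' {d' d : ℕ} (C : Matrix (Fin d' × Fin d) (Fin d' × Fin d) ℂ) :
    Matrix (Fin d) (Fin d) ℂ :=
  Matrix.of fun i j => ∑ i', C (i', i) (i', j)

/-- The swap operator on `ℂ^d ⊗ ℂ^d`. -/
def swapOp (d : ℕ) : Matrix (Fin d × Fin d) (Fin d × Fin d) ℂ :=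
  Matrix.of fun p q => if p.1 = q.2 ∧ p.2 = q.1 then 1 else 0

/-- The projector onto the symmetric subspace of `ℂ^d ⊗ ℂ^d`. -/
def symProj (d : ℕ) : Matrix (Fin d × Fin d) (Fin d × Fin d) ℂ :=
  (2 : ℂ)⁻¹ • (1 + swapOp d)

theorem isStarProjection_half_smul_one_add {𝕜 R : Type*} [Field 𝕜] [StarRing 𝕜]
    [NeZero (2 : 𝕜)] [Ring R] [StarRing R] [Algebra 𝕜 R] [StarModule 𝕜 R] {S : R}
    (hS : IsSelfAdjoint S) (hSS : S * S = 1) :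
    IsStarProjection ((2 : 𝕜)⁻¹ • (1 + S)) where
  isIdempotentElem := by
    have hsq : (1 + S) * (1 + S) = (2 : 𝕜) • (1 + S) := by
      rw [two_smul, add_mul, mul_add, mul_add, hSS]
      noncomm_ring
    rw [IsIdempotentElem, smul_mul_smul_comm, hsq, smul_smul,
      inv_mul_cancel_right₀ (NeZero.ne (2 : 𝕜))]
  isSelfAdjoint := .smul (by simp [IsSelfAdjoint]) (.add (.one R) hS)

theorem trace_mul_le_trace_of_isStarProjection {n 𝕜 : Type*} [Fintype n] [RCLike 𝕜]
    {C P : Matrix n n 𝕜} (hC : C.PosSemidef) (hP : IsStarProjection P) :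
    (C * P).trace ≤ C.trace := by
  classical
  have hQ := hP.one_sub
  have hcompress : ((1 - P)ᴴ * C * (1 - P)).trace = C.trace - (C * P).trace :=
    calc
      ((1 - P)ᴴ * C * (1 - P)).trace = (C * ((1 - P) * (1 - P)ᴴ)).trace := by
        rw [mul_assoc, trace_mul_comm, mul_assoc]
      _ = (C * (1 - P)).trace := by
        rw [← star_eq_conjTranspose, hQ.isSelfAdjoint.star_eq, hQ.isIdempotentElem.eq]
      _ = C.trace - (C * P).trace := by rw [mul_sub, mul_one, trace_sub]
  exact sub_nonneg.1 (hcompress ▸ (hC.conjTranspose_mul_mul_same (1 - P)).trace_nonneg)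

section BipartiteOperators

variable {d' d : ℕ}

theorem trace_trA' (C : Matrix (Fin d' × Fin d) (Fin d' × Fin d) ℂ) :
    (trA' C).trace = C.trace := by
  simp only [trace, diag_apply, trA', of_apply, Fintype.sum_prod_type]
  exact Finset.sum_comm

theorem trace_eq_of_trA'_eq_one {C : Matrix (Fin d' × Fin d) (Fin d' × Fin d) ℂ}
    (hC : trA' C = 1) : C.trace = d := by
  rw [← trace_trA', hC, trace_one, Fintype.card_fin]

theorem trA'_sum {ι : Type*} (s : Finset ι)
    (C : ι → Matrix (Fin d' × Fin d) (Fin d' × Fin d) ℂ) :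
    trA' (∑ k ∈ s, C k) = ∑ k ∈ s, trA' (C k) := by
  ext i j
  simp only [trA', of_apply, Matrix.sum_apply]
  exact Finset.sum_comm

theorem trA'_kronecker (A : Matrix (Fin d') (Fin d') ℂ) (B : Matrix (Fin d) (Fin d) ℂ) :
    trA' (A ⊗ₖ B) = A.trace • B := by
  ext i j
  simp [trA', trace, Finset.sum_mul]

theorem Separable.posSemidef {C : Matrix (Fin d' × Fin d) (Fin d' × Fin d) ℂ}
    (hC : Separable C) : C.PosSemidef := by
  obtain ⟨n, A, B, hA, hB, rfl⟩ := hC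
  exact posSemidef_sum _ fun k _ => (hA k).kronecker (hB k)

end BipartiteOperators

section SymmetricProjector

theorem swapOp_eq_permMatrix (d : ℕ) :
    swapOp d = Equiv.Perm.permMatrix ℂ (Equiv.prodComm (Fin d) (Fin d)) := by
  ext ⟨a, b⟩ ⟨c, e⟩
  simp [swapOp, PEquiv.toMatrix_apply, and_comm]

theorem isSelfAdjoint_swapOp (d : ℕ) : IsSelfAdjoint (swapOp d) := by
  rw [swapOp_eq_permMatrix]
  exact conjTranspose_permMatrix _

theorem swapOp_mul_self (d : ℕ) : swapOp d * swapOp d = 1 := by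
  rw [swapOp_eq_permMatrix, ← permMatrix_mul]
  exact permMatrix_one

theorem isStarProjection_symProj (d : ℕ) : IsStarProjection (symProj d) :=
  isStarProjection_half_smul_one_add (isSelfAdjoint_swapOp d) (swapOp_mul_self d)

theorem mul_symProj_eq_self {d : ℕ} {C : Matrix (Fin d × Fin d) (Fin d × Fin d) ℂ}
    (hC : C * swapOp d = C) : C * symProj d = C := by
  rw [symProj, Matrix.mul_smul, mul_add, mul_one, hC, ← two_smul ℂ C,
    inv_smul_smul₀ two_ne_zero]

end SymmetricProjector

section MeasurePrepare

/-- The Jamiołkowski operator `∑ i, |i⟩⟨i| ⊗ |i⟩⟨i|` of the channel that measures in the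
computational basis and prepares the basis vector of the outcome; it attains the benchmark. -/
def basisMeasurePrepare (d : ℕ) : Matrix (Fin d × Fin d) (Fin d × Fin d) ℂ :=
  ∑ i, single i i 1 ⊗ₖ single i i 1

theorem separable_basisMeasurePrepare (d : ℕ) : Separable (basisMeasurePrepare d) := by
  have hpos (i : Fin d) : (single i i (1 : ℂ)).PosSemidef := by
    rw [← diagonal_single]
    exact .diagonal (Pi.single_nonneg.2 zero_le_one)
  exact ⟨d, _, _, hpos, hpos, rfl⟩

theorem trA'_basisMeasurePrepare (d : ℕ) : trA' (basisMeasurePrepare d) = 1 := by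
  simp only [basisMeasurePrepare, trA'_sum, trA'_kronecker, trace_single_eq_same, one_smul,
    sum_single_one]

theorem basisMeasurePrepare_mul_swapOp (d : ℕ) :
    basisMeasurePrepare d * swapOp d = basisMeasurePrepare d := by
  have hswap (i : Fin d) :
      single (i, i) (i, i) (1 : ℂ) * swapOp d = single (i, i) (i, i) 1 := by
    rw [swapOp_eq_permMatrix, PEquiv.mul_toMatrix_toPEquiv]
    exact submatrix_single_equiv (.refl _) (.prodComm _ _) _ _ _
  simp only [basisMeasurePrepare, single_kronecker_single, mul_one, Finset.sum_mul, hswap]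

end MeasurePrepare

section Fidelity

variable {d : ℕ} {C : Matrix (Fin d × Fin d) (Fin d × Fin d) ℂ}

/-- The average fidelity `Tr[C Ω]`, with `Ω = 2 P₊ / (d (d + 1))`, of the channel with
Jamiołkowski operator `C`. The trace is real for Hermitian `C`; in general this is its real part. -/
def averageFidelity (C : Matrix (Fin d × Fin d) (Fin d × Fin d) ℂ) : ℝ :=
  ((C * ((2 / (d * (d + 1)) : ℂ) • symProj d)).trace).re

theorem averageFidelity_eq (C : Matrix (Fin d × Fin d) (Fin d × Fin d) ℂ) :
    averageFidelity C = 2 / (d * (d + 1)) * ((C * symProj d).trace).re := by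
  rw [averageFidelity, Matrix.mul_smul, trace_smul, smul_eq_mul, ← Complex.re_ofReal_mul]
  push_cast
  rfl

theorem averageFidelity_le_of_posSemidef (hC : C.PosSemidef) :
    averageFidelity C ≤ 2 / (d * (d + 1)) * C.trace.re := by
  have htrace : (C * symProj d).trace.re ≤ C.trace.re :=
    (Complex.le_def.1
      (trace_mul_le_trace_of_isStarProjection hC (isStarProjection_symProj d))).1
  rw [averageFidelity_eq]
  exact mul_le_mul_of_nonneg_left htrace (by positivity)

theorem averageFidelity_eq_of_mul_swapOp_eq_self (hC : C * swapOp d = C) :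
    averageFidelity C = 2 / (d * (d + 1)) * C.trace.re := by
  rw [averageFidelity_eq, mul_symProj_eq_self hC]

theorem normalization_mul_trace_of_trA'_eq_one (hd : d ≠ 0) (hC : trA' C = 1) :
    2 / (d * (d + 1)) * C.trace.re = (2 / (d + 1) : ℝ) := by
  rw [trace_eq_of_trA'_eq_one hC, Complex.natCast_re]
  field_simp

end Fidelity

theorem teleportation_benchmark_general (d : ℕ) (hd : d ≠ 0)
    (K : Matrix (Fin d × Fin d) (Fin d × Fin d) ℂ → Prop) (hK : ∀ C, Separable C → K C) :
    IsGreatest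
      { s : ℝ | ∃ C : Matrix (Fin d × Fin d) (Fin d × Fin d) ℂ,
          K C ∧ C.PosSemidef ∧ trA' C = 1 ∧
          s = ((C * ((2 / (d * (d + 1)) : ℂ) • symProj d)).trace).re }
      (2 / (d + 1) : ℝ) := by
  constructor
  · have hsep := separable_basisMeasurePrepare d
    have htr := trA'_basisMeasurePrepare d
    have hfid := averageFidelity_eq_of_mul_swapOp_eq_self (basisMeasurePrepare_mul_swapOp d)
    exact ⟨_, hK _ hsep, hsep.posSemidef, htr,
      (hfid.trans (normalization_mul_trace_of_trA'_eq_one hd htr)).symm⟩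
  · rintro _ ⟨C, -, hC, htr, rfl⟩
    exact (averageFidelity_le_of_posSemidef hC).trans_eq
      (normalization_mul_trace_of_trA'_eq_one hd htr)

/-- fidelity benchmark for teleportation of pure states: for `d ≥ 2` and
`Ω = P₊ / Tr[P₊] = 2 P₊ / (d(d+1))` with `P₊` the symmetric projector, the maximum of
`Tr[C Ω]` over separable positive semidefinite `C` with `Tr_{A'}[C] = I` (i.e. the
maximal average fidelity of measure-and-prepare channels on Haar-random pure states)
equals `2/(d+1)`. -/
theorem teleportation_benchmark (d : ℕ) (hd : 2 ≤ d) :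
    IsGreatest
      { s : ℝ | ∃ C : Matrix (Fin d × Fin d) (Fin d × Fin d) ℂ,
          Separable C ∧ C.PosSemidef ∧ trA' C = 1 ∧
          s = ((C * ((2 / (d * (d + 1)) : ℂ) • symProj d)).trace).re }
      (2 / (d + 1) : ℝ) :=
  teleportation_benchmark_general d (by omega) Separable fun _ h => h

end
end

section
/- (Entanglement-based CHSH benchmark.) Let X̃ := (Z+X)/√2 and Z̃ := (Z−X)/√2, where X and Z are the Pauli matrices on ℂ², and let Ω := (X̃⊗X̃ + Z̃⊗Z̃)/√2 on ℂ²⊗ℂ². Then the maximum of Tr[C Ω] over all separable positive semidefinite operators C on ℂ²⊗ℂ² with Tr_{A'}[C] = I₂ equals √2. Hence any experimental value of the CHSH test (performed on one half of a maximally entangled pair sent through a device) exceeding √2 certifies a quantum advantage over all measure-and-prepare channels. -/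
open Matrix Kronecker BigOperators ComplexOrder

noncomputable section

/-- The Pauli matrix `X`. -/
def pauliX : Matrix (Fin 2) (Fin 2) ℂ := !![0, 1; 1, 0]

/-- The Pauli matrix `Z`. -/
def pauliZ : Matrix (Fin 2) (Fin 2) ℂ := !![1, 0; 0, -1]

/-- The rotated Pauli matrix `X̃ = (Z + X)/√2`. -/
def pauliXt : Matrix (Fin 2) (Fin 2) ℂ := ((Real.sqrt 2 : ℂ))⁻¹ • (pauliZ + pauliX)

/-- The rotated Pauli matrix `Z̃ = (Z − X)/√2`. -/
def pauliZt : Matrix (Fin 2) (Fin 2) ℂ := ((Real.sqrt 2 : ℂ))⁻¹ • (pauliZ - pauliX)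

/-!
The observables `X̃` and `Z̃` are anticommuting Hermitian involutions, so `(p X̃ + q Z̃)² = p² + q²`
for real `p`, `q`. Taking `p = Tr[A X̃]` and `q = Tr[A Z̃]`, nonnegativity of the variance
of `p X̃ + q Z̃` in the unnormalised state `A ≥ 0` gives `Tr[A X̃]² + Tr[A Z̃]² ≤ Tr[A]²`.
By Cauchy–Schwarz, `Tr[(A ⊗ B)(X̃ ⊗ X̃ + Z̃ ⊗ Z̃)] ≤ Tr[A ⊗ B]`, hence `Tr[C Ω] ≤ Tr[C]/√2 = √2`
for separable `C`. Equality holds for `C = (1 ⊗ 1 + X̃ ⊗ X̃)/2`, which is separable because it is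
`P₊ ⊗ P₊ + P₋ ⊗ P₋` with `P±` the spectral projections of `X̃`.
Only the Clifford relations are used, so the argument works for any number of observables
in any dimensions.
-/

/-- A Clifford family: pairwise anticommuting self-adjoint involutions of a star ring. Such families
stand for the observables measured on each side of a generalised CHSH test. -/
structure IsCliffordFamily {ι R : Type*} [Ring R] [StarRing R] (γ : ι → R) : Prop where
  isSelfAdjoint : ∀ i, IsSelfAdjoint (γ i)
  mul_self : ∀ i, γ i * γ i = 1
  anticomm : Pairwise fun i j => γ i * γ j = -(γ j * γ i)

theorem IsCliffordFamily.sum_smul_mul_self {ι R K : Type*} [Ring R] [StarRing R] [CommRing K]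
    [Algebra K R] {γ : ι → R} (hγ : IsCliffordFamily γ) (s : Finset ι) (x : ι → K) :
    (∑ i ∈ s, x i • γ i) * (∑ i ∈ s, x i • γ i) = (∑ i ∈ s, x i ^ 2) • (1 : R) := by
  classical
  induction s using Finset.induction_on with
  | empty => simp
  | insert a s ha ih =>
    have anticomm_sum :
        (x a • γ a) * (∑ i ∈ s, x i • γ i) = -((∑ i ∈ s, x i • γ i) * (x a • γ a)) := by
      rw [Finset.mul_sum, Finset.sum_mul, ← Finset.sum_neg_distrib]
      refine Finset.sum_congr rfl fun i hi => ?_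
      have hai : a ≠ i := fun h => ha (h ▸ hi)
      rw [smul_mul_smul_comm, smul_mul_smul_comm, hγ.anticomm hai, smul_neg, mul_comm (x a)]
    rw [Finset.sum_insert ha, Finset.sum_insert ha, add_mul, mul_add, mul_add, ih, anticomm_sum,
      smul_mul_smul_comm, hγ.mul_self, add_smul, sq]
    abel

theorem IsCliffordFamily.reflect {R K : Type*} [Ring R] [StarRing R] [CommRing K]
    [StarRing K] [TrivialStar K] [Algebra K R] [StarModule K R] {P Q : R}
    (h : IsCliffordFamily ![P, Q]) {a b : K} (hab : a ^ 2 + b ^ 2 = 1) :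
    IsCliffordFamily ![a • P + b • Q, b • P - a • Q] where
  isSelfAdjoint := by
    have hP : IsSelfAdjoint P := h.isSelfAdjoint 0
    have hQ : IsSelfAdjoint Q := h.isSelfAdjoint 1
    have smul_selfAdjoint {x : K} {T : R} : IsSelfAdjoint T → IsSelfAdjoint (x • T) :=
      (IsSelfAdjoint.all x).smul
    exact Fin.forall_fin_two.2 ⟨(smul_selfAdjoint hP).add (smul_selfAdjoint hQ),
      (smul_selfAdjoint hP).sub (smul_selfAdjoint hQ)⟩
  mul_self := by
    have unit_combination_mul_self {x y : K} (hxy : x ^ 2 + y ^ 2 = 1) :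
        (x • P + y • Q) * (x • P + y • Q) = 1 := by
      simpa [Fin.sum_univ_two, hxy] using h.sum_smul_mul_self Finset.univ ![x, y]
    refine Fin.forall_fin_two.2 ⟨unit_combination_mul_self hab, ?_⟩
    have hba : b ^ 2 + (-a) ^ 2 = 1 := by rw [neg_sq, add_comm, hab]
    simpa [sub_eq_add_neg] using unit_combination_mul_self hba
  anticomm := by
    have hP : P * P = 1 := h.mul_self 0
    have hQ : Q * Q = 1 := h.mul_self 1
    have hPQ : P * Q = -(Q * P) := h.anticomm zero_ne_one
    have combination_anticomm :
        (a • P + b • Q) * (b • P - a • Q) = -((b • P - a • Q) * (a • P + b • Q)) := by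
      simp only [add_mul, mul_add, sub_mul, mul_sub, smul_mul_smul_comm, hP, hQ, hPQ]
      module
    simpa [Pairwise, Fin.forall_fin_two] using
      ⟨combination_anticomm, by rw [combination_anticomm, neg_neg]⟩

section MatrixTraces

variable {ι n m 𝕜 : Type*} [Fintype n] [Fintype m] [RCLike 𝕜]

theorem im_trace_mul_eq_zero {A M : Matrix n n 𝕜} (hA : A.IsHermitian) (hM : M.IsHermitian) :
    RCLike.im (A * M).trace = 0 := by
  rw [← RCLike.conj_eq_iff_im, starRingEnd_apply, ← trace_conjTranspose, conjTranspose_mul,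
    hA.eq, hM.eq, trace_mul_comm]

theorem re_trace_mul_sq_le {A M : Matrix n n 𝕜} (hA : A.PosSemidef) (hM : M.IsHermitian) :
    RCLike.re (A * M).trace ^ 2 ≤ RCLike.re A.trace * RCLike.re (A * (M * M)).trace := by
  classical
  have quadratic_nonneg (x : ℝ) : 0 ≤ RCLike.re A.trace * (x * x) +
      2 * RCLike.re (A * M).trace * x + RCLike.re (A * (M * M)).trace := by
    let N : Matrix n n 𝕜 := x • 1 + M
    have hN : N.IsHermitian := (isHermitian_one.smul (IsSelfAdjoint.all x)).add hM
    have trace_eq : (N * A * N).trace =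
        (x * x) • A.trace + (2 * x) • (A * M).trace + (A * (M * M)).trace := by
      rw [mul_assoc, trace_mul_comm, mul_assoc]
      simp only [N, mul_add, add_mul, smul_mul_assoc, mul_smul_comm, one_mul, mul_one, trace_add,
        trace_smul, smul_add, smul_smul]
      module
    have trace_nonneg := (hA.conjTranspose_mul_mul_same N).trace_nonneg
    rw [hN.eq, trace_eq] at trace_nonneg
    have re_nonneg := (RCLike.nonneg_iff.1 trace_nonneg).1
    simp only [map_add, RCLike.smul_re] at re_nonneg
    linarith
  have discrim_nonpos := discrim_le_zero quadratic_nonneg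
  rw [discrim] at discrim_nonpos
  linarith

theorem posSemidef_one_add_of_mul_self_eq_one [DecidableEq n] {M : Matrix n n 𝕜}
    (hM : M.IsHermitian) (hMM : M * M = 1) : (1 + M).PosSemidef := by
  have eq_half_square : 1 + M = (2⁻¹ : ℝ) • ((1 + M)ᴴ * (1 + M)) := by
    rw [conjTranspose_add, conjTranspose_one, hM.eq, mul_add, add_mul, add_mul, hMM, one_mul,
      one_mul, mul_one]
    module
  rw [eq_half_square]
  exact (posSemidef_conjTranspose_mul_self _).smul (by norm_num)

namespace IsCliffordFamily

variable [DecidableEq n] [DecidableEq m] {γ : ι → Matrix n n 𝕜} {δ : ι → Matrix m m 𝕜}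

theorem sum_re_trace_mul_sq_le [Fintype ι] (hγ : IsCliffordFamily γ) {A : Matrix n n 𝕜}
    (hA : A.PosSemidef) : ∑ i, RCLike.re (A * γ i).trace ^ 2 ≤ RCLike.re A.trace ^ 2 := by
  set p : ι → ℝ := fun i => RCLike.re (A * γ i).trace
  set S : ℝ := ∑ i, p i ^ 2
  let M : Matrix n n 𝕜 := ∑ i, p i • γ i
  have hM : M.IsHermitian :=
    isSelfAdjoint_sum _ fun i _ => (IsSelfAdjoint.all (p i)).smul (hγ.isSelfAdjoint i)
  have mean_eq : RCLike.re (A * M).trace = S := by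
    simp only [M, S, p, Finset.mul_sum, mul_smul_comm, trace_sum, trace_smul, map_sum,
      RCLike.smul_re, sq]
  have second_moment_eq : RCLike.re (A * (M * M)).trace = S * RCLike.re A.trace := by
    rw [hγ.sum_smul_mul_self, mul_smul_comm, mul_one, trace_smul, RCLike.smul_re]
  have variance_nonneg := re_trace_mul_sq_le hA hM
  rw [mean_eq, second_moment_eq] at variance_nonneg
  have hS : 0 ≤ S := Finset.sum_nonneg fun i _ => sq_nonneg (p i)
  rcases hS.eq_or_lt with hS0 | hSpos
  · rw [← hS0]
    positivity
  · exact le_of_mul_le_mul_left (by linarith) hSpos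

theorem re_trace_kronecker_mul_sum_le [Fintype ι] (hγ : IsCliffordFamily γ)
    (hδ : IsCliffordFamily δ) {A : Matrix n n 𝕜} {B : Matrix m m 𝕜} (hA : A.PosSemidef)
    (hB : B.PosSemidef) :
    RCLike.re ((A ⊗ₖ B) * ∑ i, γ i ⊗ₖ δ i).trace ≤ RCLike.re (A ⊗ₖ B).trace := by
  have hA0 := RCLike.nonneg_iff.1 hA.trace_nonneg
  have hB0 := RCLike.nonneg_iff.1 hB.trace_nonneg
  have lhs_eq : RCLike.re ((A ⊗ₖ B) * ∑ i, γ i ⊗ₖ δ i).trace =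
      ∑ i, RCLike.re (A * γ i).trace * RCLike.re (B * δ i).trace := by
    simp only [Finset.mul_sum, trace_sum, ← mul_kronecker_mul, trace_kronecker, map_sum,
      RCLike.mul_re, im_trace_mul_eq_zero hA.isHermitian (hγ.isSelfAdjoint _), zero_mul, sub_zero]
  rw [lhs_eq, trace_kronecker, RCLike.mul_re, hA0.2, zero_mul, sub_zero]
  refine le_of_sq_le_sq ?_ (mul_nonneg hA0.1 hB0.1)
  calc (∑ i, RCLike.re (A * γ i).trace * RCLike.re (B * δ i).trace) ^ 2
      ≤ (∑ i, RCLike.re (A * γ i).trace ^ 2) * ∑ i, RCLike.re (B * δ i).trace ^ 2 :=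
        Finset.sum_mul_sq_le_sq_mul_sq _ _ _
    _ ≤ RCLike.re A.trace ^ 2 * RCLike.re B.trace ^ 2 := by
        gcongr
        exacts [hγ.sum_re_trace_mul_sq_le hA, hδ.sum_re_trace_mul_sq_le hB]
    _ = (RCLike.re A.trace * RCLike.re B.trace) ^ 2 := (mul_pow _ _ _).symm

theorem trace_mul_eq_zero (hγ : IsCliffordFamily γ) {i j : ι} (hij : i ≠ j) :
    (γ i * γ j).trace = 0 := by
  rw [← self_eq_neg, trace_mul_comm (γ i), ← trace_neg, ← hγ.anticomm hij, trace_mul_comm]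

theorem trace_eq_zero [Nontrivial ι] (hγ : IsCliffordFamily γ) (i : ι) : (γ i).trace = 0 := by
  obtain ⟨j, hji⟩ := exists_ne i
  have conj_eq_neg : γ j * γ i * γ j = -γ i := by
    rw [hγ.anticomm hji, neg_mul, mul_assoc, hγ.mul_self, mul_one]
  have trace_conj : (γ j * γ i * γ j).trace = (γ i).trace := by
    rw [trace_mul_comm, ← mul_assoc, hγ.mul_self, one_mul]
  rw [← self_eq_neg, ← trace_neg, ← conj_eq_neg, trace_conj]

theorem trace_one_add_kronecker_mul_sum [Fintype ι] [Nontrivial ι] (hγ : IsCliffordFamily γ)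
    (hδ : IsCliffordFamily δ) (i : ι) :
    ((1 + γ i ⊗ₖ δ i) * ∑ j, γ j ⊗ₖ δ j).trace = Fintype.card n * Fintype.card m := by
  have sum_traces : (∑ j, γ j ⊗ₖ δ j).trace = 0 := by
    simp only [trace_sum, trace_kronecker, hγ.trace_eq_zero, zero_mul, Finset.sum_const_zero]
  have diagonal_term :
      (γ i ⊗ₖ δ i * ∑ j, γ j ⊗ₖ δ j).trace = (γ i * γ i).trace * (δ i * δ i).trace := by
    simp only [Finset.mul_sum, trace_sum, ← mul_kronecker_mul, trace_kronecker]
    refine Fintype.sum_eq_single i fun j hji => ?_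
    rw [hγ.trace_mul_eq_zero hji.symm, zero_mul]
  rw [add_mul, one_mul, trace_add, sum_traces, zero_add, diagonal_term, hγ.mul_self, hδ.mul_self,
    trace_one, trace_one]

end IsCliffordFamily

end MatrixTraces

section PartialTrace

variable {d' d : ℕ}

theorem trA'_add (C D : Matrix (Fin d' × Fin d) (Fin d' × Fin d) ℂ) :
    trA' (C + D) = trA' C + trA' D := by
  ext i j
  simp only [trA', of_apply, Matrix.add_apply, Finset.sum_add_distrib]

theorem trA'_smul {R : Type*} [DistribSMul R ℂ] (c : R)
    (C : Matrix (Fin d' × Fin d) (Fin d' × Fin d) ℂ) :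
    trA' (c • C) = c • trA' C := by
  ext i j
  simp only [trA', of_apply, Matrix.smul_apply, Finset.smul_sum]

end PartialTrace

namespace Separable

variable {d' d : ℕ} {C : Matrix (Fin d' × Fin d) (Fin d' × Fin d) ℂ}

theorem posSemidef_s11 (hC : Separable C) : C.PosSemidef := by
  obtain ⟨n, A, B, hA, hB, rfl⟩ := hC
  exact posSemidef_sum _ fun k _ => (hA k).kronecker (hB k)

theorem smul (hC : Separable C) {c : ℝ} (hc : 0 ≤ c) : Separable (c • C) := by
  obtain ⟨n, A, B, hA, hB, rfl⟩ := hC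
  refine ⟨n, fun k => c • A k, B, fun k => (hA k).smul hc, hB, ?_⟩
  simp only [Finset.smul_sum, smul_kronecker]

theorem re_trace_mul_sum_kronecker_le {ι : Type*} [Fintype ι] (hC : Separable C)
    {γ : ι → Matrix (Fin d') (Fin d') ℂ} {δ : ι → Matrix (Fin d) (Fin d) ℂ}
    (hγ : IsCliffordFamily γ) (hδ : IsCliffordFamily δ) :
    (C * ∑ i, γ i ⊗ₖ δ i).trace.re ≤ C.trace.re := by
  obtain ⟨n, A, B, hA, hB, rfl⟩ := hC
  rw [Finset.sum_mul, trace_sum, trace_sum, Complex.re_sum, Complex.re_sum]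
  exact Finset.sum_le_sum fun k _ => hγ.re_trace_kronecker_mul_sum_le hδ (hA k) (hB k)

end Separable

theorem separable_one_add_kronecker {d' d : ℕ} {M : Matrix (Fin d') (Fin d') ℂ}
    {N : Matrix (Fin d) (Fin d) ℂ} (hM : M.IsHermitian) (hMM : M * M = 1) (hN : N.IsHermitian)
    (hNN : N * N = 1) : Separable (1 + M ⊗ₖ N) := by
  have spectral_sum : 1 + M ⊗ₖ N =
      (2⁻¹ : ℝ) • ((1 + M) ⊗ₖ (1 + N) + (1 + -M) ⊗ₖ (1 + -N)) := by
    simp only [← neg_one_smul ℂ M, ← neg_one_smul ℂ N, add_kronecker, kronecker_add,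
      smul_kronecker, kronecker_smul, one_kronecker_one]
    module
  have hM' := posSemidef_one_add_of_mul_self_eq_one hM.neg ((neg_mul_neg M M).trans hMM)
  have hN' := posSemidef_one_add_of_mul_self_eq_one hN.neg ((neg_mul_neg N N).trans hNN)
  rw [spectral_sum]
  refine Separable.smul ⟨2, ![1 + M, 1 + -M], ![1 + N, 1 + -N], ?_, ?_, ?_⟩ (by norm_num)
  · exact Fin.forall_fin_two.2 ⟨posSemidef_one_add_of_mul_self_eq_one hM hMM, hM'⟩
  · exact Fin.forall_fin_two.2 ⟨posSemidef_one_add_of_mul_self_eq_one hN hNN, hN'⟩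
  · rw [Fin.sum_univ_two]
    rfl

theorem isCliffordFamily_pauliZ_pauliX : IsCliffordFamily ![pauliZ, pauliX] where
  isSelfAdjoint := Fin.forall_fin_two.2
    ⟨by simp [IsSelfAdjoint, ← Matrix.ext_iff, pauliZ],
      by simp [IsSelfAdjoint, ← Matrix.ext_iff, pauliX]⟩
  mul_self := Fin.forall_fin_two.2
    ⟨by simp [pauliZ, one_fin_two], by simp [pauliX, one_fin_two]⟩
  anticomm := by simp [Pairwise, Fin.forall_fin_two, pauliX, pauliZ]

theorem isCliffordFamily_pauliXt_pauliZt : IsCliffordFamily ![pauliXt, pauliZt] := by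
  have unit_coefficients : ((√2)⁻¹ : ℝ) ^ 2 + (√2)⁻¹ ^ 2 = 1 := by
    rw [inv_pow, Real.sq_sqrt zero_le_two]
    norm_num
  have hXt : pauliXt = (√2)⁻¹ • pauliZ + (√2)⁻¹ • pauliX := by
    rw [pauliXt, ← Complex.ofReal_inv, Complex.coe_smul, smul_add]
  have hZt : pauliZt = (√2)⁻¹ • pauliZ - (√2)⁻¹ • pauliX := by
    rw [pauliZt, ← Complex.ofReal_inv, Complex.coe_smul, smul_sub]
  rw [hXt, hZt]
  exact isCliffordFamily_pauliZ_pauliX.reflect unit_coefficients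

theorem chsh_benchmark_general {ι : Type*} [Fintype ι] [Nontrivial ι] {d' d : ℕ} [NeZero d']
    {γ : ι → Matrix (Fin d') (Fin d') ℂ} {δ : ι → Matrix (Fin d) (Fin d) ℂ}
    (hγ : IsCliffordFamily γ) (hδ : IsCliffordFamily δ) {c : ℝ} (hc : 0 ≤ c) :
    IsGreatest
      { s : ℝ | ∃ C : Matrix (Fin d' × Fin d) (Fin d' × Fin d) ℂ,
          Separable C ∧ C.PosSemidef ∧ trA' C = 1 ∧
          s = (C * ((c : ℂ) • ∑ i, γ i ⊗ₖ δ i)).trace.re }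
      (c * d) := by
  have re_trace_mul_smul (C D : Matrix (Fin d' × Fin d) (Fin d' × Fin d) ℂ) :
      (C * ((c : ℂ) • D)).trace.re = c * (C * D).trace.re := by
    rw [mul_smul_comm, trace_smul, smul_eq_mul, Complex.re_ofReal_mul]
  have hd' : (d' : ℝ) ≠ 0 := NeZero.ne _
  constructor
  · let i : ι := Classical.arbitrary ι
    have hC : Separable ((d' : ℝ)⁻¹ • (1 + γ i ⊗ₖ δ i)) :=
      (separable_one_add_kronecker (hγ.isSelfAdjoint i) (hγ.mul_self i) (hδ.isSelfAdjoint i)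
        (hδ.mul_self i)).smul (by positivity)
    refine ⟨_, hC, hC.posSemidef_s11, ?_, ?_⟩
    · rw [trA'_smul, trA'_add, ← one_kronecker_one, trA'_kronecker, trA'_kronecker,
        hγ.trace_eq_zero, zero_smul, add_zero, trace_one, Fintype.card_fin,
        ← Complex.ofReal_natCast, Complex.coe_smul, inv_smul_smul₀ hd']
    · rw [re_trace_mul_smul, smul_mul_assoc, trace_smul, hγ.trace_one_add_kronecker_mul_sum hδ,
        Complex.smul_re, Fintype.card_fin, Fintype.card_fin, ← Nat.cast_mul, Complex.natCast_re,
        Nat.cast_mul, smul_eq_mul, inv_mul_cancel_left₀ hd']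
  · rintro s ⟨C, hC, -, hCtr, rfl⟩
    have trace_eq : C.trace.re = d := by
      rw [← trace_trA', hCtr, trace_one, Fintype.card_fin, Complex.natCast_re]
    rw [re_trace_mul_smul, ← trace_eq]
    exact mul_le_mul_of_nonneg_left (hC.re_trace_mul_sum_kronecker_le hγ hδ) hc

/-- entanglement-based CHSH benchmark: with
`Ω = (X̃⊗X̃ + Z̃⊗Z̃)/√2`, the maximum of `Tr[C Ω]` over separable positive semidefinite
`C` on `ℂ²⊗ℂ²` with `Tr_{A'}[C] = I` equals `√2`. -/
theorem chsh_benchmark :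
    IsGreatest
      { s : ℝ | ∃ C : Matrix (Fin 2 × Fin 2) (Fin 2 × Fin 2) ℂ,
          Separable C ∧ C.PosSemidef ∧ trA' C = 1 ∧
          s = ((C * (((Real.sqrt 2 : ℂ))⁻¹ •
            (pauliXt ⊗ₖ pauliXt + pauliZt ⊗ₖ pauliZt))).trace).re }
      (Real.sqrt 2) := by
  simpa [Fin.sum_univ_two, Real.div_sqrt, ← div_eq_inv_mul] using chsh_benchmark_general
    isCliffordFamily_pauliXt_pauliZt isCliffordFamily_pauliXt_pauliZt (c := (√2)⁻¹) (by positivity)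

end
end

section
/- (Performance operator of the CHSH test.) Let X̃ := (Z+X)/√2 and Z̃ := (Z−X)/√2 with X, Z the Pauli matrices on ℂ², let O := √2 (X̃⊗X̃ + Z̃⊗Z̃) be the CHSH observable on H_{A'}⊗H_R = ℂ²⊗ℂ², and let σ := |Φ⁺⟩⟨Φ⁺| on H_A⊗H_R with |Φ⁺⟩ = (|0⟩⊗|0⟩ + |1⟩⊗|1⟩)/√2. Then the performance operator of the pair (O, σ), namely the operator Ω on H_{A'}⊗H_A with entries Ω_{(i',i),(j',j)} = Σ_{r,s} O_{(i',r),(j',s)} σ_{(i,s),(j,r)}, equals O/2 = (X̃⊗X̃ + Z̃⊗Z̃)/√2 (read as a matrix on H_{A'}⊗H_A). -/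
open Matrix Kronecker BigOperators ComplexOrder

noncomputable section

/-- The performance operator of the pair `(O, σ)`:
`Ω_{(i',i),(j',j)} = Σ_{r,s} O_{(i',r),(j',s)} σ_{(i,s),(j,r)}`. -/
def perf {dA dA' dR : ℕ}
    (O : Matrix (Fin dA' × Fin dR) (Fin dA' × Fin dR) ℂ)
    (σ : Matrix (Fin dA × Fin dR) (Fin dA × Fin dR) ℂ) :
    Matrix (Fin dA' × Fin dA) (Fin dA' × Fin dA) ℂ :=
  Matrix.of fun p q => ∑ r, ∑ s, O (p.1, r) (q.1, s) * σ (p.2, s) (q.2, r)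

/-- The maximally entangled two-qubit vector `|Φ⁺⟩ = (|00⟩ + |11⟩)/√2`. -/
def phiPlus : Fin 2 × Fin 2 → ℂ :=
  fun p => if p.1 = p.2 then ((Real.sqrt 2 : ℂ))⁻¹ else 0

/-!
Every vector of a bipartite space is `vec V` for a matrix `V`, and the input `|vec V⟩⟨vec V|` turns
an observable `A ⊗ₖ B` into `A ⊗ₖ (Vᴴ * B * V)ᵀ`. For `|Φ⁺⟩` the matrix `V` is `1 / √2` times the
identity, so the second factor is transposed and the observable is halved. Since `X̃` and `Z̃` are
symmetric, the CHSH observable is merely halved.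
-/

section PerformanceOperator

variable {dA dA' dR : ℕ}

lemma perf_add_left (O₁ O₂ : Matrix (Fin dA' × Fin dR) (Fin dA' × Fin dR) ℂ)
    (σ : Matrix (Fin dA × Fin dR) (Fin dA × Fin dR) ℂ) :
    perf (O₁ + O₂) σ = perf O₁ σ + perf O₂ σ := by
  ext p q
  simp only [perf, of_apply, Matrix.add_apply, add_mul, Finset.sum_add_distrib]

lemma perf_smul_left (c : ℂ) (O : Matrix (Fin dA' × Fin dR) (Fin dA' × Fin dR) ℂ)
    (σ : Matrix (Fin dA × Fin dR) (Fin dA × Fin dR) ℂ) :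
    perf (c • O) σ = c • perf O σ := by
  ext p q
  simp only [perf, of_apply, Matrix.smul_apply, smul_eq_mul, Finset.mul_sum, mul_assoc]

lemma perf_kronecker_outer_vec (A : Matrix (Fin dA') (Fin dA') ℂ) (B : Matrix (Fin dR) (Fin dR) ℂ)
    (V : Matrix (Fin dR) (Fin dA) ℂ) :
    perf (A ⊗ₖ B) (outer (vec V)) = A ⊗ₖ (Vᴴ * B * V)ᵀ := by
  ext ⟨i', i⟩ ⟨j', j⟩
  calc ∑ r, ∑ s, A i' j' * B r s * (V s i * star (V r j))
      = A i' j' * ∑ s, ∑ r, star (V r j) * B r s * V s i := by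
        rw [Finset.sum_comm]
        simp only [Finset.mul_sum]
        exact Finset.sum_congr rfl fun s _ => Finset.sum_congr rfl fun r _ => by ring
    _ = (A ⊗ₖ (Vᴴ * B * V)ᵀ) (i', i) (j', j) := by
        simp only [kronecker_apply, transpose_apply, mul_apply, conjTranspose_apply, Finset.sum_mul]

end PerformanceOperator

lemma phiPlus_eq_vec : phiPlus = vec ((Real.sqrt 2 : ℂ)⁻¹ • (1 : Matrix (Fin 2) (Fin 2) ℂ)) := by
  ext ⟨i, j⟩
  simp only [phiPlus, vec, Matrix.smul_apply, one_apply, smul_eq_mul, mul_ite, mul_one, mul_zero,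
    eq_comm]

lemma perf_kronecker_outer_phiPlus {d : ℕ} (A : Matrix (Fin d) (Fin d) ℂ)
    (B : Matrix (Fin 2) (Fin 2) ℂ) :
    perf (A ⊗ₖ B) (outer phiPlus) = (2 : ℂ)⁻¹ • (A ⊗ₖ Bᵀ) := by
  have inv_sqrt_two_mul_self : (Real.sqrt 2 : ℂ)⁻¹ * (Real.sqrt 2 : ℂ)⁻¹ = 2⁻¹ := by
    rw [← mul_inv, ← Complex.ofReal_mul, Real.mul_self_sqrt zero_le_two, Complex.ofReal_ofNat]
  rw [phiPlus_eq_vec, perf_kronecker_outer_vec]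
  simp [smul_smul, inv_sqrt_two_mul_self, kronecker_smul]

lemma isSymm_pauliX : pauliX.IsSymm := by
  ext i j
  fin_cases i <;> fin_cases j <;> rfl

lemma isSymm_pauliZ : pauliZ.IsSymm := by
  ext i j
  fin_cases i <;> fin_cases j <;> rfl

lemma isSymm_pauliXt : pauliXt.IsSymm :=
  (isSymm_pauliZ.add isSymm_pauliX).smul _

lemma isSymm_pauliZt : pauliZt.IsSymm :=
  (isSymm_pauliZ.sub isSymm_pauliX).smul _

/-- performance operator of the CHSH test: with the CHSH observable
`O = √2 (X̃⊗X̃ + Z̃⊗Z̃)` and input `σ = |Φ⁺⟩⟨Φ⁺|`, the performance operator of `(O, σ)`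
equals `O/2 = (X̃⊗X̃ + Z̃⊗Z̃)/√2`. -/
theorem chsh_performance_operator :
    perf ((Real.sqrt 2 : ℂ) • (pauliXt ⊗ₖ pauliXt + pauliZt ⊗ₖ pauliZt)) (outer phiPlus)
      = ((Real.sqrt 2 : ℂ))⁻¹ • (pauliXt ⊗ₖ pauliXt + pauliZt ⊗ₖ pauliZt) := by
  have sqrt_two_mul_half : (Real.sqrt 2 : ℂ) * 2⁻¹ = (Real.sqrt 2 : ℂ)⁻¹ := by
    rw [← div_eq_mul_inv]
    exact_mod_cast Real.sqrt_div_self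
  rw [perf_smul_left, perf_add_left, perf_kronecker_outer_phiPlus, perf_kronecker_outer_phiPlus,
    isSymm_pauliXt.eq, isSymm_pauliZt.eq, ← smul_add, smul_smul, sqrt_two_mul_half]

end
end

section
/- (Product numerical range for the equatorial-qubit test.) Let Ω := (1/4)(|0⟩⟨0|⊗|0⟩⟨0| + |1⟩⟨1|⊗|1⟩⟨1| + 2|Ψ⁺⟩⟨Ψ⁺|) on ℂ²⊗ℂ², with |Ψ⁺⟩ = (|0⟩⊗|1⟩ + |1⟩⊗|0⟩)/√2. Then sup{⟨a⊗b, Ω(a⊗b)⟩ : a, b ∈ ℂ² unit vectors} = 3/8; equivalently, the product numerical range Λ⊗(Ω) equals 3/8. -/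
open Matrix Kronecker BigOperators ComplexOrder

noncomputable section

/-- The two-qubit vector `|Ψ⁺⟩ = (|01⟩ + |10⟩)/√2`. -/
def psiPlus : Fin 2 × Fin 2 → ℂ :=
  fun p => if p.1 ≠ p.2 then ((Real.sqrt 2 : ℂ))⁻¹ else 0

/-- The standard basis vectors of `ℂ²`. -/
def e0 : Fin 2 → ℂ := ![1, 0]
def e1 : Fin 2 → ℂ := ![0, 1]

/-- The performance operator of the equatorial-qubit fidelity test:
`Ω = (1/4)(|0⟩⟨0|⊗|0⟩⟨0| + |1⟩⟨1|⊗|1⟩⟨1| + 2|Ψ⁺⟩⟨Ψ⁺|)`. -/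
def eqOmega : Matrix (Fin 2 × Fin 2) (Fin 2 × Fin 2) ℂ :=
  ((4 : ℂ))⁻¹ • (outer e0 ⊗ₖ outer e0 + outer e1 ⊗ₖ outer e1 + (2 : ℂ) • outer psiPlus)

/-- The product numerical range `Λ⊗(M) = sup {⟨a⊗b, M (a⊗b)⟩ : a, b unit vectors}`. -/
def pnr {d' d : ℕ} (M : Matrix (Fin d' × Fin d) (Fin d' × Fin d) ℂ) : ℝ :=
  sSup { r : ℝ | ∃ (a : Fin d' → ℂ) (b : Fin d → ℂ),
    (∑ i, ‖a i‖ ^ 2) = 1 ∧ (∑ i, ‖b i‖ ^ 2) = 1 ∧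
    r = (star (fun p : Fin d' × Fin d => a p.1 * b p.2) ⬝ᵥ
          M *ᵥ (fun p : Fin d' × Fin d => a p.1 * b p.2)).re }

/-!
On a product vector the form of `Ω` is
`(|a₀b₀|² + |a₁b₁|² + |a₀b₁ + a₁b₀|²) / 4 = (‖a‖²‖b‖² + 2 Re (a₀b₁ (a₁b₀)*)) / 4`.
For unit vectors, AM-GM bounds both `|a₀a₁|` and `|b₀b₁|` by `1/2`, so the form is at most
`(1 + 1/2) / 4 = 3/8`, with equality at `|+⟩ ⊗ |+⟩`.
-/

section ProductVectors

variable {ι κ : Type*}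

/-- The product vector `a ⊗ b`, in the coordinates used by the Kronecker product of matrices. -/
def prodVec {R : Type*} [Mul R] (a : ι → R) (b : κ → R) : ι × κ → R :=
  fun p => a p.1 * b p.2

lemma star_prodVec_dotProduct_prodVec {R : Type*} [CommSemiring R] [StarRing R] [Fintype ι]
    [Fintype κ] (v a : ι → R) (w b : κ → R) :
    star (prodVec v w) ⬝ᵥ prodVec a b = (star v ⬝ᵥ a) * (star w ⬝ᵥ b) := by
  simp only [dotProduct, prodVec, Pi.star_apply, star_mul', Fintype.sum_prod_type,
    Fintype.sum_mul_sum, mul_mul_mul_comm]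

lemma outer_kronecker_outer_s15 (v : ι → ℂ) (w : κ → ℂ) :
    outer v ⊗ₖ outer w = outer (prodVec v w) := by
  ext p q
  simp only [outer, prodVec, kroneckerMap_apply, vecMulVec_apply, Pi.star_apply, star_mul',
    mul_mul_mul_comm]

lemma star_dotProduct_outer_mulVec [Fintype ι] (v u : ι → ℂ) :
    star u ⬝ᵥ outer v *ᵥ u = (‖star v ⬝ᵥ u‖ ^ 2 : ℝ) := by
  rw [outer, vecMulVec_mulVec, dotProduct_smul, op_smul_eq_mul, star_dotProduct u v,
    Complex.ofReal_pow, ← Complex.conj_mul', starRingEnd_apply]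

end ProductVectors

section EquatorialTest

lemma star_e0_dotProduct (a : Fin 2 → ℂ) : star e0 ⬝ᵥ a = a 0 := by
  simp [e0, dotProduct]

lemma star_e1_dotProduct (a : Fin 2 → ℂ) : star e1 ⬝ᵥ a = a 1 := by
  simp [e1, dotProduct]

lemma star_psiPlus_dotProduct_prodVec (a b : Fin 2 → ℂ) :
    star psiPlus ⬝ᵥ prodVec a b = (Real.sqrt 2 : ℂ)⁻¹ * (a 0 * b 1 + a 1 * b 0) := by
  simp [psiPlus, prodVec, dotProduct, Fintype.sum_prod_type, mul_add]

lemma norm_inv_sqrt_two_sq : ‖(Real.sqrt 2 : ℂ)⁻¹‖ ^ 2 = 1 / 2 := by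
  rw [norm_inv, Complex.norm_real, inv_pow, Real.norm_eq_abs, sq_abs, Real.sq_sqrt zero_le_two,
    one_div]

lemma star_prodVec_dotProduct_eqOmega_mulVec (a b : Fin 2 → ℂ) :
    star (prodVec a b) ⬝ᵥ eqOmega *ᵥ prodVec a b =
      ((‖a 0 * b 0‖ ^ 2 + ‖a 1 * b 1‖ ^ 2 + ‖a 0 * b 1 + a 1 * b 0‖ ^ 2) / 4 : ℝ) := by
  simp only [eqOmega, outer_kronecker_outer_s15, smul_mulVec, add_mulVec, dotProduct_smul,
    dotProduct_add, star_dotProduct_outer_mulVec, star_prodVec_dotProduct_prodVec,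
    star_e0_dotProduct, star_e1_dotProduct, star_psiPlus_dotProduct_prodVec, smul_eq_mul,
    norm_mul (Real.sqrt 2 : ℂ)⁻¹, mul_pow _ ‖_ + _‖, norm_inv_sqrt_two_sq]
  push_cast
  ring

/-- The left-hand side is the squared `ℓ²` norm of the coefficients of `(x + y T) (z + w T)`. -/
lemma norm_sq_linear_mul_linear_le {R : Type*} [SeminormedRing R] (x y z w : R) :
    ‖x * z‖ ^ 2 + ‖y * w‖ ^ 2 + ‖x * w + y * z‖ ^ 2 ≤
      3 / 2 * ((‖x‖ ^ 2 + ‖y‖ ^ 2) * (‖z‖ ^ 2 + ‖w‖ ^ 2)) := by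
  have cross_le : (2 * ‖x‖ * ‖y‖) * (2 * ‖z‖ * ‖w‖) ≤
      (‖x‖ ^ 2 + ‖y‖ ^ 2) * (‖z‖ ^ 2 + ‖w‖ ^ 2) := by
    gcongr <;> exact two_mul_le_add_sq _ _
  calc ‖x * z‖ ^ 2 + ‖y * w‖ ^ 2 + ‖x * w + y * z‖ ^ 2
      ≤ (‖x‖ * ‖z‖) ^ 2 + (‖y‖ * ‖w‖) ^ 2 + (‖x‖ * ‖w‖ + ‖y‖ * ‖z‖) ^ 2 := by
        gcongr
        · exact norm_mul_le x z
        · exact norm_mul_le y w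
        · exact norm_add_le_of_le (norm_mul_le x w) (norm_mul_le y z)
    _ = (‖x‖ ^ 2 + ‖y‖ ^ 2) * (‖z‖ ^ 2 + ‖w‖ ^ 2) +
          (2 * ‖x‖ * ‖y‖) * (2 * ‖z‖ * ‖w‖) / 2 := by ring
    _ ≤ 3 / 2 * ((‖x‖ ^ 2 + ‖y‖ ^ 2) * (‖z‖ ^ 2 + ‖w‖ ^ 2)) := by linarith

lemma re_star_prodVec_dotProduct_eqOmega_mulVec_le (a b : Fin 2 → ℂ) :
    (star (prodVec a b) ⬝ᵥ eqOmega *ᵥ prodVec a b).re ≤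
      3 / 8 * ((∑ i, ‖a i‖ ^ 2) * ∑ i, ‖b i‖ ^ 2) := by
  rw [star_prodVec_dotProduct_eqOmega_mulVec, Complex.ofReal_re, Fin.sum_univ_two,
    Fin.sum_univ_two]
  linarith [norm_sq_linear_mul_linear_le (a 0) (a 1) (b 0) (b 1)]

/-- The equatorial state `|+⟩ = (|0⟩ + |1⟩)/√2`; the product `|+⟩ ⊗ |+⟩` attains `Λ⊗(Ω)`. -/
def plusState : Fin 2 → ℂ :=
  fun _ => (Real.sqrt 2 : ℂ)⁻¹

lemma sum_norm_sq_plusState : ∑ i, ‖plusState i‖ ^ 2 = 1 := by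
  simp only [plusState, norm_inv_sqrt_two_sq, Fin.sum_univ_two, add_halves]

lemma re_star_prodVec_plusState_dotProduct_eqOmega_mulVec :
    (star (prodVec plusState plusState) ⬝ᵥ eqOmega *ᵥ prodVec plusState plusState).re = 3 / 8 := by
  rw [star_prodVec_dotProduct_eqOmega_mulVec, Complex.ofReal_re]
  simp only [plusState, ← two_mul, norm_mul, mul_pow, norm_inv_sqrt_two_sq]
  norm_num

end EquatorialTest

/-- product numerical range for the equatorial-qubit test:
`Λ⊗(Ω) = 3/8` for `Ω = (1/4)(|0⟩⟨0|⊗|0⟩⟨0| + |1⟩⟨1|⊗|1⟩⟨1| + 2|Ψ⁺⟩⟨Ψ⁺|)`. -/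
theorem equatorial_pnr : pnr eqOmega = 3 / 8 := by
  apply IsGreatest.csSup_eq
  constructor
  · exact ⟨plusState, plusState, sum_norm_sq_plusState, sum_norm_sq_plusState,
      re_star_prodVec_plusState_dotProduct_eqOmega_mulVec.symm⟩
  · rintro _ ⟨a, b, ha, hb, rfl⟩
    calc (star (prodVec a b) ⬝ᵥ eqOmega *ᵥ prodVec a b).re
        ≤ 3 / 8 * ((∑ i, ‖a i‖ ^ 2) * ∑ i, ‖b i‖ ^ 2) :=
          re_star_prodVec_dotProduct_eqOmega_mulVec_le a b
      _ = 3 / 8 := by rw [ha, hb, mul_one, mul_one]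

end
end
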